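/- (Analytic identity underlying the quotient of theta null sums in the proof of Theorem 4.1 of the paper.) Let g ≥ 1, let p be an odd positive integer, let ν ≥ 1 be an integer, let ε ∈ {0,1}^g ⊂ ℤ^g, and let Ω ∈ 𝔥_g. If θ_2[ε,0](0, 2^ν p·Ω) ≠ 0, then ( ∑_{u ∈ {0,…,2^ν−1}^g} (−1)^{ε·u} θ_{2^ν p}[0, p·u](0, (1/(2^ν p))Ω) ) / ( ∑_{u ∈ {0,…,2^ν p−1}^g} (−1)^{ε·u} θ_{2^ν p}[0, u](0, (1/(2^ν p))Ω) ) = p^{−g} · θ_2[ε,0](0, (2^ν/p)Ω) / θ_2[ε,0](0, 2^ν p·Ω). -/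

import Mathlib

open scoped BigOperators

/-- The `n`-th term of the series defining the theta function with rational
characteristics `θ_l[ε₁,ε₂](z,Ω)` (equation (1) of the paper). -/
noncomputable def thetaTerm (g l : ℕ) (ε₁ ε₂ : Fin g → ℤ) (z : Fin g → ℂ)
    (Ω : Matrix (Fin g) (Fin g) ℂ) (n : Fin g → ℤ) : ℂ :=
  Complex.exp (↑Real.pi * Complex.I *
      (∑ i, ∑ j, ((n i : ℂ) + (ε₁ i : ℂ) / (l : ℂ)) * Ω i j *
        ((n j : ℂ) + (ε₁ j : ℂ) / (l : ℂ)))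
    + 2 * ↑Real.pi * Complex.I *
      (∑ i, ((n i : ℂ) + (ε₁ i : ℂ) / (l : ℂ)) * (z i + (ε₂ i : ℂ) / (l : ℂ))))

/-- The theta function with rational characteristics `θ_l[ε₁,ε₂](z,Ω)`. -/
noncomputable def thetaChar (g l : ℕ) (ε₁ ε₂ : Fin g → ℤ) (z : Fin g → ℂ)
    (Ω : Matrix (Fin g) (Fin g) ℂ) : ℂ :=
  ∑' n : Fin g → ℤ, thetaTerm g l ε₁ ε₂ z Ω n

/-- `Ω` belongs to the Siegel upper half space `𝔥_g`: it is symmetric and its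
imaginary part is positive definite. -/
def IsSiegel {g : ℕ} (Ω : Matrix (Fin g) (Fin g) ℂ) : Prop :=
  Ω.IsSymm ∧ (Matrix.of fun i j => (Ω i j).im).PosDef

/-!
Summing `θ_M[0,u](z,Ω)`, for even `M`, against the character `u ↦ (-1)^(ε·u)` of `(ℤ/M)^g` keeps
`M^g` times the terms of the theta series at the lattice points `n ≡ (M/2)ε mod M`. Written as
`n = M(m + ε/2)`, these are the terms of `θ_2[ε,0](Mz, M²Ω)`. Since `θ_{Mp}[0,pu] = θ_M[0,u]`, the
numerator is such a sum for `M = 2^ν` and the denominator one for `2^ν p`; the factor `p^(-g)` is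
the quotient of `M^g` by `(Mp)^g`.
-/

section Convergence

open Complex Matrix
open scoped MatrixOrder Real

variable {ι : Type*} [Fintype ι]

theorem exists_pos_mul_dotProduct_self_le {Y : Matrix ι ι ℝ} (hY : Y.PosDef) :
    ∃ c > 0, ∀ x : ι → ℝ, c * (x ⬝ᵥ x) ≤ x ⬝ᵥ Y *ᵥ x := by
  classical
  cases isEmpty_or_nonempty ι
  · exact ⟨1, one_pos, fun x ↦ by simp⟩
  obtain ⟨c, hc, hcY⟩ := (CFC.exists_pos_algebraMap_le_iff hY.isHermitian).2
    fun _ hx ↦ hY.isStrictlyPositive.spectrum_pos hx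
  refine ⟨c, hc, fun x ↦ ?_⟩
  have h := (Matrix.le_iff.1 hcY).dotProduct_mulVec_nonneg x
  rwa [star_trivial, sub_mulVec, dotProduct_sub, Algebra.algebraMap_eq_smul_one, smul_mulVec,
    one_mulVec, dotProduct_smul, smul_eq_mul, sub_nonneg] at h

theorem summable_prod_pi {β : ι → Type*} {f : ∀ i, β i → ℝ} (hf₀ : ∀ i b, 0 ≤ f i b)
    (hf : ∀ i, Summable (f i)) : Summable fun n : ∀ i, β i ↦ ∏ i, f i (n i) := by
  classical
  have hprod₀ (n : ∀ i, β i) : 0 ≤ ∏ i, f i (n i) := Finset.prod_nonneg fun i _ ↦ hf₀ i _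
  refine summable_of_sum_le hprod₀ (c := ∏ i, ∑' b, f i b) fun s ↦ ?_
  calc ∑ n ∈ s, ∏ i, f i (n i)
      ≤ ∑ n ∈ Fintype.piFinset fun i ↦ s.image (· i), ∏ i, f i (n i) :=
        Finset.sum_le_sum_of_subset_of_nonneg
          (fun n hn ↦ Fintype.mem_piFinset.2 fun _ ↦ Finset.mem_image_of_mem _ hn)
          fun n _ _ ↦ hprod₀ n
    _ = ∏ i, ∑ b ∈ s.image (· i), f i b := (Finset.prod_univ_sum _ _).symm
    _ ≤ ∏ i, ∑' b, f i b :=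
        Finset.prod_le_prod (fun i _ ↦ Finset.sum_nonneg fun b _ ↦ hf₀ i b)
          fun i _ ↦ (hf i).sum_le_tsum _ fun b _ ↦ hf₀ i b

theorem summable_exp_neg_quadratic {c : ℝ} (hc : 0 < c) (a y : ℝ) :
    Summable fun n : ℤ ↦ rexp (-π * (c * (n + a) ^ 2) - 2 * π * ((n + a) * y)) := by
  -- Completing the square turns the shift by `a` into a shift of the elliptic variable.
  have h := ((summable_jacobiTheta₂_term_iff ((c * a + y : ℝ) * I) (c * I)).2 (by simpa)).norm
  refine (h.mul_left (rexp (-π * (c * a ^ 2) - 2 * π * (a * y)))).congr fun n ↦ ?_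
  rw [norm_jacobiTheta₂_term, ← Real.exp_add, im_ofReal_mul, im_ofReal_mul, I_im]
  ring_nf

/-- The exponential `exp (πi xᵀ Ω x + 2πi xᵀ z)` whose values on shifts of the lattice `ℤ^ι` are
the terms of theta series. -/
noncomputable def thetaExp (Ω : Matrix ι ι ℂ) (z x : ι → ℂ) : ℂ :=
  cexp (π * I * (x ⬝ᵥ Ω *ᵥ x) + 2 * π * I * (x ⬝ᵥ z))

theorem thetaExp_smul (Ω : Matrix ι ι ℂ) (z : ι → ℂ) (c : ℂ) (x : ι → ℂ) :
    thetaExp Ω z (c • x) = thetaExp (c ^ 2 • Ω) (c • z) x := by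
  simp only [thetaExp, mulVec_smul, smul_mulVec, dotProduct_smul, smul_dotProduct, smul_eq_mul]
  ring_nf

theorem norm_thetaExp_ofReal (Ω : Matrix ι ι ℂ) (z : ι → ℂ) (x : ι → ℝ) :
    ‖thetaExp Ω z fun i ↦ x i‖ =
      rexp (-π * (x ⬝ᵥ Ω.map im *ᵥ x) - 2 * π * (x ⬝ᵥ fun i ↦ (z i).im)) := by
  have him : ((fun i ↦ (x i : ℂ)) ⬝ᵥ Ω *ᵥ fun i ↦ (x i : ℂ)).im = x ⬝ᵥ Ω.map im *ᵥ x := by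
    simp [dotProduct, mulVec]
  have him' : ((fun i ↦ (x i : ℂ)) ⬝ᵥ z).im = x ⬝ᵥ fun i ↦ (z i).im := by
    simp [dotProduct]
  rw [thetaExp, norm_exp, ← him, ← him']
  congr 1
  simp only [add_re, mul_re, ofReal_re, I_re, mul_zero, ofReal_im, I_im, mul_one, sub_self,
    zero_mul, mul_im, add_zero, zero_sub, re_ofNat, im_ofNat, sub_zero, neg_mul]
  ring

theorem summable_thetaExp {Ω : Matrix ι ι ℂ} (hΩ : (Ω.map im).PosDef) (z : ι → ℂ) (a : ι → ℝ) :
    Summable fun n : ι → ℤ ↦ thetaExp Ω z fun i ↦ ((n i + a i : ℝ) : ℂ) := by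
  obtain ⟨c, hc, hcΩ⟩ := exists_pos_mul_dotProduct_self_le hΩ
  refine .of_norm_bounded (summable_prod_pi (fun _ _ ↦ (Real.exp_pos _).le)
    fun i ↦ summable_exp_neg_quadratic hc (a i) (z i).im) fun n ↦ ?_
  set x : ι → ℝ := fun i ↦ n i + a i
  calc ‖thetaExp Ω z fun i ↦ x i‖
      = rexp (-π * (x ⬝ᵥ Ω.map im *ᵥ x) - 2 * π * (x ⬝ᵥ fun i ↦ (z i).im)) :=
        norm_thetaExp_ofReal Ω z x
    _ ≤ rexp (-π * (c * (x ⬝ᵥ x)) - 2 * π * (x ⬝ᵥ fun i ↦ (z i).im)) := by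
        rw [neg_mul, neg_mul]
        gcongr
        exact hcΩ x
    _ = ∏ i, rexp (-π * (c * x i ^ 2) - 2 * π * (x i * (z i).im)) := by
        simp only [← Real.exp_sum, dotProduct, Finset.mul_sum, Finset.sum_sub_distrib, sq]

end Convergence

section RootsOfUnity

variable {ι K E : Type*} [Field K]

theorem sum_zpow_pow_of_isPrimitiveRoot {ζ : K} {M : ℕ} (hζ : IsPrimitiveRoot ζ M) (k : ℤ) :
    ∑ u : Fin M, (ζ ^ k) ^ (u : ℕ) = if (M : ℤ) ∣ k then (M : K) else 0 := by
  rw [Fin.sum_univ_eq_sum_range fun u ↦ (ζ ^ k) ^ u]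
  split_ifs with hk
  · simp [(hζ.zpow_eq_one_iff_dvd k).2 hk]
  · have hM : (ζ ^ k) ^ M = 1 := by
      rw [← zpow_natCast, zpow_comm, zpow_natCast, hζ.pow_eq_one, one_zpow]
    rw [geom_sum_eq (mt (hζ.zpow_eq_one_iff_dvd k).1 hk), hM, sub_self, zero_div]

theorem sum_prod_zpow_pow_of_isPrimitiveRoot [Fintype ι] [DecidableEq ι] {ζ : K} {M : ℕ}
    (hζ : IsPrimitiveRoot ζ M) (k : ι → ℤ) :
    ∑ u : ι → Fin M, ∏ i, (ζ ^ k i) ^ (u i : ℕ) =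
      if ∀ i, (M : ℤ) ∣ k i then (M : K) ^ Fintype.card ι else 0 := by
  rw [← Fintype.prod_sum fun i (u : Fin M) ↦ (ζ ^ k i) ^ (u : ℕ)]
  simp only [sum_zpow_pow_of_isPrimitiveRoot hζ, Fintype.prod_ite_zero, Finset.prod_const,
    Finset.card_univ]

theorem tsum_ite_forall_dvd_sub [AddCommMonoid E] [TopologicalSpace E] {d : ℤ} (hd : d ≠ 0)
    (b : ι → ℤ) [DecidablePred fun n : ι → ℤ ↦ ∀ i, d ∣ n i - b i] (F : (ι → ℤ) → E) :
    ∑' n : ι → ℤ, (if ∀ i, d ∣ n i - b i then F n else 0) = ∑' m : ι → ℤ, F (d • m + b) := by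
  have hinj : Function.Injective fun m : ι → ℤ ↦ d • m + b :=
    (add_left_injective b).comp (smul_right_injective _ hd)
  have hsupp : (Function.support fun n : ι → ℤ ↦ if ∀ i, d ∣ n i - b i then F n else 0) ⊆
      Set.range fun m : ι → ℤ ↦ d • m + b := by
    intro n hn
    have hdvd : ∀ i, d ∣ n i - b i := by
      by_contra h
      exact hn (if_neg h)
    choose m hm using hdvd
    exact ⟨m, funext fun i ↦ by simp [← hm]⟩
  rw [← hinj.tsum_eq hsupp]
  simp

end RootsOfUnity

section ThetaChar

open Complex Matrix
open scoped Real

variable {g : ℕ}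

theorem thetaTerm_eq_thetaExp (l : ℕ) (ε₁ ε₂ : Fin g → ℤ) (z : Fin g → ℂ)
    (Ω : Matrix (Fin g) (Fin g) ℂ) (n : Fin g → ℤ) :
    thetaTerm g l ε₁ ε₂ z Ω n =
      thetaExp Ω (fun i ↦ z i + ε₂ i / l) fun i ↦ n i + ε₁ i / l := by
  simp only [thetaTerm, thetaExp, dotProduct, mulVec, Finset.mul_sum, mul_assoc]

theorem summable_thetaTerm (l : ℕ) (ε₁ ε₂ : Fin g → ℤ) (z : Fin g → ℂ)
    {Ω : Matrix (Fin g) (Fin g) ℂ} (hΩ : (Ω.map im).PosDef) :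
    Summable (thetaTerm g l ε₁ ε₂ z Ω) :=
  (summable_thetaExp hΩ (fun i ↦ z i + ε₂ i / l) fun i ↦ ε₁ i / l).congr fun n ↦ by
    simp [thetaTerm_eq_thetaExp]

theorem thetaChar_mul_smul_smul (l : ℕ) {q : ℕ} (hq : q ≠ 0) (ε₁ ε₂ : Fin g → ℤ) (z : Fin g → ℂ)
    (Ω : Matrix (Fin g) (Fin g) ℂ) :
    thetaChar g (l * q) ((q : ℤ) • ε₁) ((q : ℤ) • ε₂) z Ω = thetaChar g l ε₁ ε₂ z Ω := by
  have hq' : (q : ℂ) ≠ 0 := Nat.cast_ne_zero.2 hq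
  have hcancel (k : ℤ) : (((q : ℤ) • k : ℤ) : ℂ) / ((l * q : ℕ) : ℂ) = k / l := by
    push_cast [smul_eq_mul]
    rw [mul_comm (l : ℂ), mul_div_mul_left _ _ hq']
  simp only [thetaChar, thetaTerm_eq_thetaExp, Pi.smul_apply, hcancel]

theorem neg_one_zpow_mul_thetaTerm {h : ℕ} (hh : h ≠ 0) (ε u : Fin g → ℤ) (z : Fin g → ℂ)
    (Ω : Matrix (Fin g) (Fin g) ℂ) (n : Fin g → ℤ) :
    (-1 : ℂ) ^ (∑ i, ε i * u i) * thetaTerm g (2 * h) 0 u z Ω n =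
      thetaExp Ω z (fun i ↦ n i) *
        ∏ i, (cexp (2 * π * I / (2 * h : ℕ)) ^ (n i - h * ε i)) ^ u i := by
  have hh' : (h : ℂ) ≠ 0 := Nat.cast_ne_zero.2 hh
  -- The exponent `-πi` rather than `πi` makes `n ≡ hε` the surviving class instead of `n ≡ -hε`.
  have hsign (a : ℤ) : (-1 : ℂ) ^ a = cexp (a * -(π * I)) := by
    rw [exp_int_mul, exp_neg, exp_pi_mul_I, inv_neg_one]
  simp only [thetaTerm_eq_thetaExp, thetaExp, hsign, ← exp_int_mul, ← exp_sum, ← exp_add,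
    Pi.zero_apply, Int.cast_zero, zero_div, add_zero]
  rw [add_left_comm, add_assoc]
  congr 2
  push_cast
  simp only [dotProduct, Finset.mul_sum, Finset.sum_mul, ← Finset.sum_add_distrib]
  refine Finset.sum_congr rfl fun i _ ↦ ?_
  field_simp
  ring

theorem sum_neg_one_zpow_mul_thetaChar {M : ℕ} (hM : Even M) (hM₀ : M ≠ 0) (ε : Fin g → ℤ)
    (z : Fin g → ℂ) {Ω : Matrix (Fin g) (Fin g) ℂ} (hΩ : (Ω.map im).PosDef) :
    ∑ u : Fin g → Fin M, (-1 : ℂ) ^ (∑ i, ε i * ((u i : ℕ) : ℤ)) *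
        thetaChar g M 0 (fun i ↦ ((u i : ℕ) : ℤ)) z Ω =
      (M : ℂ) ^ g * thetaChar g 2 ε 0 ((M : ℂ) • z) ((M : ℂ) ^ 2 • Ω) := by
  obtain ⟨h, rfl⟩ := even_iff_two_dvd.1 hM
  have hh : h ≠ 0 := by rintro rfl; exact hM₀ rfl
  have hζ := isPrimitiveRoot_exp (2 * h) hM₀
  simp only [thetaChar, ← tsum_mul_left]
  rw [← Summable.tsum_finsetSum fun u _ ↦ (summable_thetaTerm _ _ _ _ hΩ).mul_left _]
  simp only [neg_one_zpow_mul_thetaTerm hh, zpow_natCast, ← Finset.mul_sum,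
    sum_prod_zpow_pow_of_isPrimitiveRoot hζ, mul_ite, mul_zero, Fintype.card_fin]
  rw [tsum_ite_forall_dvd_sub (Nat.cast_ne_zero.2 hM₀) (fun i ↦ h * ε i)
    (fun n ↦ thetaExp Ω z (fun i ↦ n i) * ((2 * h : ℕ) : ℂ) ^ g)]
  refine tsum_congr fun m ↦ ?_
  have hscale : (fun i ↦ ((((2 * h : ℕ) : ℤ) • m + fun i ↦ h * ε i : Fin g → ℤ) i : ℂ)) =
      ((2 * h : ℕ) : ℂ) • fun i ↦ m i + (ε i : ℂ) / (2 : ℕ) := by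
    ext i
    push_cast [Pi.add_apply, Pi.smul_apply, smul_eq_mul]
    ring
  rw [hscale, thetaExp_smul, thetaTerm_eq_thetaExp, mul_comm]
  simp only [Pi.zero_apply, Int.cast_zero, zero_div, add_zero]

theorem posDef_map_im_smul {ι : Type*} {Ω : Matrix ι ι ℂ} (hΩ : (Ω.map im).PosDef) {c : ℝ}
    (hc : 0 < c) : (((c : ℂ) • Ω).map im).PosDef := by
  have hsmul : ((c : ℂ) • Ω).map im = c • Ω.map im := by
    ext i j
    exact im_ofReal_mul c (Ω i j)
  exact hsmul ▸ hΩ.smul hc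

theorem theta_null_quotient_general {M p : ℕ} (hM : Even M) (hM₀ : M ≠ 0) (hp : p ≠ 0)
    (ε : Fin g → ℤ) (z : Fin g → ℂ) {Ω : Matrix (Fin g) (Fin g) ℂ} (hΩ : (Ω.map im).PosDef)
    (hne : thetaChar g 2 ε 0 (((M * p : ℕ) : ℂ) • z) (((M * p : ℕ) : ℂ) • Ω) ≠ 0) :
    (∑ u : Fin g → Fin M, (-1 : ℂ) ^ (∑ i, ε i * ((u i : ℕ) : ℤ)) *
          thetaChar g (M * p) 0 (fun i ↦ (p : ℤ) * ((u i : ℕ) : ℤ)) z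
            ((1 / ((M * p : ℕ) : ℂ)) • Ω)) /
      (∑ u : Fin g → Fin (M * p), (-1 : ℂ) ^ (∑ i, ε i * ((u i : ℕ) : ℤ)) *
          thetaChar g (M * p) 0 (fun i ↦ ((u i : ℕ) : ℤ)) z ((1 / ((M * p : ℕ) : ℂ)) • Ω)) =
    (p : ℂ) ^ (-(g : ℤ)) * thetaChar g 2 ε 0 ((M : ℂ) • z) (((M : ℂ) / (p : ℂ)) • Ω) /
      thetaChar g 2 ε 0 (((M * p : ℕ) : ℂ) • z) (((M * p : ℕ) : ℂ) • Ω) := by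
  have hMp : M * p ≠ 0 := mul_ne_zero hM₀ hp
  have hΩ' : (((1 / ((M * p : ℕ) : ℂ)) • Ω).map im).PosDef := by
    simpa using posDef_map_im_smul hΩ (by positivity : 0 < 1 / ((M * p : ℕ) : ℝ))
  have hcancel (u : Fin g → Fin M) (Ω : Matrix (Fin g) (Fin g) ℂ) :
      thetaChar g (M * p) 0 (fun i ↦ (p : ℤ) * ((u i : ℕ) : ℤ)) z Ω =
        thetaChar g M 0 (fun i ↦ ((u i : ℕ) : ℤ)) z Ω := by
    rw [← thetaChar_mul_smul_smul M hp, smul_zero]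
    rfl
  have hnum : (M : ℂ) ^ 2 * (1 / ((M * p : ℕ) : ℂ)) = M / p := by
    push_cast
    field_simp
  have hden : ((M * p : ℕ) : ℂ) ^ 2 * (1 / ((M * p : ℕ) : ℂ)) = ((M * p : ℕ) : ℂ) := by
    push_cast
    field_simp
  simp only [hcancel]
  rw [sum_neg_one_zpow_mul_thetaChar hM hM₀ ε z hΩ',
    sum_neg_one_zpow_mul_thetaChar (hM.mul_right p) hMp ε z hΩ', smul_smul, smul_smul, hnum, hden,
    div_eq_div_iff (mul_ne_zero (pow_ne_zero g (Nat.cast_ne_zero.2 hMp)) hne) hne,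
    _root_.zpow_neg, zpow_natCast, Nat.cast_mul, mul_pow]
  field_simp

end ThetaChar

/-- analytic identity underlying the quotient of theta null sums
in the proof of Theorem 4.1 of the paper. -/
theorem theta_null_quotient (g : ℕ) (hg : 1 ≤ g) (p : ℕ) (hp : Odd p) (hp0 : 0 < p)
    (ν : ℕ) (hν : 1 ≤ ν) (ε : Fin g → ℤ) (hε : ∀ i, ε i = 0 ∨ ε i = 1)
    (Ω : Matrix (Fin g) (Fin g) ℂ) (hΩ : IsSiegel Ω)
    (hne : thetaChar g 2 ε 0 0 ((((2 ^ ν * p : ℕ) : ℂ)) • Ω) ≠ 0) :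
    (∑ u : Fin g → Fin (2 ^ ν),
        (-1 : ℂ) ^ (∑ i, ε i * ((u i : ℕ) : ℤ)) *
          thetaChar g (2 ^ ν * p) 0 (fun i => (p : ℤ) * ((u i : ℕ) : ℤ)) 0
            ((1 / ((2 ^ ν * p : ℕ) : ℂ)) • Ω)) /
      (∑ u : Fin g → Fin (2 ^ ν * p),
        (-1 : ℂ) ^ (∑ i, ε i * ((u i : ℕ) : ℤ)) *
          thetaChar g (2 ^ ν * p) 0 (fun i => ((u i : ℕ) : ℤ)) 0
            ((1 / ((2 ^ ν * p : ℕ) : ℂ)) • Ω))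
    = (p : ℂ) ^ (-(g : ℤ)) *
        thetaChar g 2 ε 0 0 (((2 ^ ν : ℂ) / (p : ℂ)) • Ω) /
          thetaChar g 2 ε 0 0 ((((2 ^ ν * p : ℕ) : ℂ)) • Ω) := by
  simpa using theta_null_quotient_general (p := p) (even_two.pow_of_ne_zero (by omega : ν ≠ 0))
    (by positivity : 2 ^ ν ≠ 0) hp0.ne' ε 0 hΩ.2 (by simpa using hne)
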